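/- A function parameter is a continuous positive function $\rho$ on $(0,\infty)$. For a positive function $\rho$ on $(0,\infty)$ put $\bar\rho(s)=\sup_{t>0}\rho(st)/\rho(t)$, $s>0$. A function parameter $\rho$ is of class $\mathcal B$ if $\rho(1)=1$ and $\bar\rho(s)<\infty$ for every $s>0$; it is of class $\mathcal B^{+-}$ if moreover $\int_0^\infty \min(1,1/t)\,\bar\rho(t)\,\frac{dt}{t}<\infty$. Call $\rho$ normalized if $\rho(t)$ is non-decreasing and $\rho(t)/t$ is non-increasing on $(0,\infty)$, and call two positive functions $\rho,\sigma$ on $(0,\infty)$ equivalent if $c\rho\le\sigma\le C\rho$ for some constants $c,C>0$. Let $\rho$ be a function parameter of class $\mathcal B^{+-}$ and define $\gamma(t)=1/\bar\rho(t^{-1})$, $t>0$. Then: 1. $\bar\gamma(t)\le\bar\rho(t)<\infty$ for all $t>0$; and $\gamma$ is positive, $\gamma(1)=1$ and $\int_0^\infty \min(1,1/t)\,\bar\gamma(t)\,\frac{dt}{t}<\infty$, that is, $\gamma$ satisfies all the conditions of class $\mathcal B^{+-}$ except possibly continuity. 2. If $\rho$ is normalized, then $\gamma$ is a function parameter of class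 $\mathcal B^{+-}$. 3. In general, there is a normalized function parameter $\rho_1$ of class $\mathcal B^{+-}$ equivalent to $\rho$ such that $\gamma_1(t)=1/\bar\rho_1(t^{-1})$ is a function parameter of class $\mathcal B^{+-}$ equivalent to $\gamma$. -/

import Mathlib

noncomputable section

/-- The set of quotients `ρ(st)/ρ(t)`, `t > 0`. -/
def quotients (ρ : ℝ → ℝ) (s : ℝ) : Set ℝ := {r : ℝ | ∃ t > 0, r = ρ (s * t) / ρ t}

/-- `rbar ρ s = sup_{t>0} ρ(st)/ρ(t)`; used where `quotients ρ s` is bounded above. -/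
def rbar (ρ : ℝ → ℝ) (s : ℝ) : ℝ := sSup (quotients ρ s)

/-- A function parameter: a continuous positive function on `(0,∞)`
(values outside `(0,∞)` are irrelevant). -/
structure IsFunctionParameter (ρ : ℝ → ℝ) : Prop where
  pos : ∀ t > 0, 0 < ρ t
  cont : ContinuousOn ρ (Set.Ioi 0)

/-- The class `ℬ` of function parameters. -/
structure IsClassB (ρ : ℝ → ℝ) : Prop extends IsFunctionParameter ρ where
  one : ρ 1 = 1
  bdd : ∀ s > 0, BddAbove (quotients ρ s)

/-- `∫₀^∞ min(1,1/t) ρ̄(t) dt/t < ∞`. -/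
def FiniteIntegral (ρ : ℝ → ℝ) : Prop :=
  MeasureTheory.IntegrableOn (fun t => min 1 (1 / t) * rbar ρ t / t) (Set.Ioi 0)

/-- The class `ℬ^{+-}` of function parameters. -/
structure IsClassBpm (ρ : ℝ → ℝ) : Prop extends IsClassB ρ where
  integ : FiniteIntegral ρ

/-- `ρ(t)` is non-decreasing and `ρ(t)/t` is non-increasing on `(0,∞)`. -/
def IsNormalized (ρ : ℝ → ℝ) : Prop :=
  MonotoneOn ρ (Set.Ioi 0) ∧ AntitoneOn (fun t => ρ t / t) (Set.Ioi 0)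

/-- Equivalence of positive functions on `(0,∞)`. -/
def ParamEquiv (ρ σ : ℝ → ℝ) : Prop :=
  ∃ c > 0, ∃ C > 0, ∀ t > 0, c * ρ t ≤ σ t ∧ σ t ≤ C * ρ t

/-- `γ(t) = 1/ρ̄(t⁻¹)`. -/
def gam (ρ : ℝ → ℝ) (t : ℝ) : ℝ := 1 / rbar ρ t⁻¹

end

/-!
Everything rests on the submultiplicativity `ρ̄(st) ≤ ρ̄(s) ρ̄(t)`. It gives `γ(st) ≤ ρ̄(s) γ(t)`,
hence `γ̄ ≤ ρ̄`, with equality because `γ(1) / γ(s⁻¹) = ρ̄(s)`. Being normalized amounts to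
`min(1, t/s) ρ(s) ≤ ρ(t)` for all `s, t > 0`, a condition that passes from `ρ` to `ρ̄` and `γ` and
forces continuity.

For `ρ₁` take a multiple of the least normalized majorant `t ↦ sup_s min(1, t/s) ρ(s)`, which is at
most `sup_u min(1, 1/u) ρ̄(u) · ρ(t)`. That supremum is finite: submultiplicativity bounds
`f(u) = min(1, 1/u) ρ̄(u)` by `2 f(v) f(u/v)` when `√u ≤ v ≤ 2√u`, so `√f(u) ≤ f(v) + f(u/v)` by
AM-GM, and averaging over `v` with respect to `dv/v` bounds `√f(u)` by a multiple of
`∫₀^∞ f(t) dt/t`.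
-/

open MeasureTheory Set

section DilationBounded

variable {ρ : ℝ → ℝ} {s t M : ℝ}

/-- A positive function on `(0,∞)` with `ρ̄` finite: the class `ℬ` without continuity and without
the condition `ρ(1) = 1`. -/
structure IsDilationBounded (ρ : ℝ → ℝ) : Prop where
  pos : ∀ t > 0, 0 < ρ t
  bdd : ∀ s > 0, BddAbove (quotients ρ s)

theorem IsClassB.isDilationBounded (h : IsClassB ρ) : IsDilationBounded ρ :=
  ⟨h.pos, h.bdd⟩

theorem mem_upperBounds_quotients (hpos : ∀ t > 0, 0 < ρ t) :
    M ∈ upperBounds (quotients ρ s) ↔ ∀ t > 0, ρ (s * t) ≤ M * ρ t := by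
  constructor
  · exact fun hM t ht => (div_le_iff₀ (hpos t ht)).1 (hM ⟨t, ht, rfl⟩)
  · rintro h _ ⟨t, ht, rfl⟩
    exact (div_le_iff₀ (hpos t ht)).2 (h t ht)

theorem IsDilationBounded.of_forall_le {N : ℝ → ℝ} (hpos : ∀ t > 0, 0 < ρ t)
    (h : ∀ s > 0, ∀ t > 0, ρ (s * t) ≤ N s * ρ t) : IsDilationBounded ρ :=
  ⟨hpos, fun s hs => ⟨N s, (mem_upperBounds_quotients hpos).2 (h s hs)⟩⟩

namespace IsDilationBounded

theorem rbar_le_iff (h : IsDilationBounded ρ) (hs : 0 < s) :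
    rbar ρ s ≤ M ↔ ∀ t > 0, ρ (s * t) ≤ M * ρ t := by
  have hlub : IsLUB (quotients ρ s) (rbar ρ s) := isLUB_csSup ⟨_, 1, one_pos, rfl⟩ (h.bdd s hs)
  rw [isLUB_le_iff hlub, mem_upperBounds_quotients h.pos]

theorem le_rbar_mul (h : IsDilationBounded ρ) (hs : 0 < s) (ht : 0 < t) :
    ρ (s * t) ≤ rbar ρ s * ρ t :=
  (h.rbar_le_iff hs).1 le_rfl t ht

theorem rbar_pos (h : IsDilationBounded ρ) (hs : 0 < s) : 0 < rbar ρ s :=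
  pos_of_mul_pos_left ((h.pos _ (mul_pos hs one_pos)).trans_le (h.le_rbar_mul hs one_pos))
    (h.pos 1 one_pos).le

theorem rbar_one (h : IsDilationBounded ρ) : rbar ρ 1 = 1 := by
  apply le_antisymm
  · exact (h.rbar_le_iff one_pos).2 fun t _ => by simp only [one_mul, le_refl]
  · have : ρ 1 ≤ rbar ρ 1 * ρ 1 := by simpa only [mul_one] using h.le_rbar_mul one_pos one_pos
    exact (le_mul_iff_one_le_left (h.pos 1 one_pos)).1 this

theorem rbar_mul_le (h : IsDilationBounded ρ) (hs : 0 < s) (ht : 0 < t) :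
    rbar ρ (s * t) ≤ rbar ρ s * rbar ρ t := by
  refine (h.rbar_le_iff (mul_pos hs ht)).2 fun u hu => ?_
  calc ρ (s * t * u) = ρ (s * (t * u)) := by rw [mul_assoc]
    _ ≤ rbar ρ s * ρ (t * u) := h.le_rbar_mul hs (mul_pos ht hu)
    _ ≤ rbar ρ s * (rbar ρ t * ρ u) :=
        mul_le_mul_of_nonneg_left (h.le_rbar_mul ht hu) (h.rbar_pos hs).le
    _ = rbar ρ s * rbar ρ t * ρ u := (mul_assoc ..).symm

theorem gam_pos (h : IsDilationBounded ρ) (ht : 0 < t) : 0 < gam ρ t :=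
  one_div_pos.2 (h.rbar_pos (inv_pos.2 ht))

theorem gam_one (h : IsDilationBounded ρ) : gam ρ 1 = 1 := by
  rw [gam, inv_one, h.rbar_one, div_one]

theorem gam_mul_le (h : IsDilationBounded ρ) (hs : 0 < s) (ht : 0 < t) :
    gam ρ (s * t) ≤ rbar ρ s * gam ρ t := by
  have hst : 0 < (s * t)⁻¹ := inv_pos.2 (mul_pos hs ht)
  have hsub : rbar ρ t⁻¹ ≤ rbar ρ s * rbar ρ (s * t)⁻¹ := by
    have : s * (s * t)⁻¹ = t⁻¹ := by field_simp
    simpa only [this] using h.rbar_mul_le hs hst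
  rw [gam, gam, mul_one_div, div_le_div_iff₀ (h.rbar_pos hst) (h.rbar_pos (inv_pos.2 ht)), one_mul]
  exact hsub

protected theorem gam (h : IsDilationBounded ρ) : IsDilationBounded (gam ρ) :=
  .of_forall_le (fun _ ht => h.gam_pos ht) fun _ hs _ ht => h.gam_mul_le hs ht

theorem rbar_gam (h : IsDilationBounded ρ) (hs : 0 < s) : rbar (gam ρ) s = rbar ρ s := by
  apply le_antisymm
  · exact (h.gam.rbar_le_iff hs).2 fun t ht => h.gam_mul_le hs ht
  · refine le_csSup (h.gam.bdd s hs) ⟨s⁻¹, inv_pos.2 hs, ?_⟩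
    rw [mul_inv_cancel₀ hs.ne', h.gam_one, gam, inv_inv, one_div_one_div]

end IsDilationBounded

theorem FiniteIntegral.gam (h : IsDilationBounded ρ) (hint : FiniteIntegral ρ) :
    FiniteIntegral (gam ρ) :=
  hint.congr_fun (fun t ht => by simp only [h.rbar_gam ht]) measurableSet_Ioi

end DilationBounded

namespace ParamEquiv

variable {ρ σ : ℝ → ℝ}

protected theorem symm (h : ParamEquiv ρ σ) : ParamEquiv σ ρ := by
  obtain ⟨c, hc, C, hC, hcC⟩ := h
  refine ⟨C⁻¹, inv_pos.2 hC, c⁻¹, inv_pos.2 hc, fun t ht => ⟨?_, ?_⟩⟩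
  · exact (inv_mul_le_iff₀ hC).2 (hcC t ht).2
  · exact (le_inv_mul_iff₀ hc).2 (hcC t ht).1

theorem div_const {a : ℝ} (h : ParamEquiv ρ σ) (ha : 0 < a) :
    ParamEquiv ρ (fun t => σ t / a) := by
  obtain ⟨c, hc, C, hC, hcC⟩ := h
  refine ⟨c / a, div_pos hc ha, C / a, div_pos hC ha, fun t ht => ?_⟩
  rw [div_mul_eq_mul_div, div_mul_eq_mul_div]
  exact ⟨div_le_div_of_nonneg_right (hcC t ht).1 ha.le,
    div_le_div_of_nonneg_right (hcC t ht).2 ha.le⟩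

theorem exists_dilation_le (h : ParamEquiv ρ σ) (hρ : IsDilationBounded ρ) :
    ∃ K > 0, ∀ s > 0, ∀ t > 0, σ (s * t) ≤ K * rbar ρ s * σ t := by
  obtain ⟨c, hc, C, hC, hcC⟩ := h
  refine ⟨C / c, div_pos hC hc, fun s hs t ht => ?_⟩
  have hrbar := hρ.rbar_pos hs
  calc σ (s * t) ≤ C * ρ (s * t) := (hcC _ (mul_pos hs ht)).2
    _ ≤ C * (rbar ρ s * ρ t) := mul_le_mul_of_nonneg_left (hρ.le_rbar_mul hs ht) hC.le
    _ = C / c * rbar ρ s * (c * ρ t) := by field_simp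
    _ ≤ C / c * rbar ρ s * σ t := mul_le_mul_of_nonneg_left (hcC t ht).1 (by positivity)

theorem isDilationBounded (h : ParamEquiv ρ σ) (hρ : IsDilationBounded ρ) :
    IsDilationBounded σ := by
  obtain ⟨K, -, hK⟩ := h.exists_dilation_le hρ
  obtain ⟨c, hc, C, -, hcC⟩ := h
  exact .of_forall_le (fun t ht => (mul_pos hc (hρ.pos t ht)).trans_le (hcC t ht).1) hK

theorem exists_rbar_le (h : ParamEquiv ρ σ) (hρ : IsDilationBounded ρ) :
    ∃ K > 0, ∀ s > 0, rbar σ s ≤ K * rbar ρ s := by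
  obtain ⟨K, hK, hle⟩ := h.exists_dilation_le hρ
  exact ⟨K, hK, fun s hs => ((h.isDilationBounded hρ).rbar_le_iff hs).2 (hle s hs)⟩

protected theorem gam (h : ParamEquiv ρ σ) (hρ : IsDilationBounded ρ) :
    ParamEquiv (gam ρ) (gam σ) := by
  have hσ := h.isDilationBounded hρ
  obtain ⟨K, hK, hσρ⟩ := h.exists_rbar_le hρ
  obtain ⟨L, hL, hρσ⟩ := h.symm.exists_rbar_le hσ
  refine ⟨K⁻¹, inv_pos.2 hK, L, hL, fun t ht => ?_⟩
  have ht' := inv_pos.2 ht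
  have hρ_pos := hρ.rbar_pos ht'
  have hσ_pos := hσ.rbar_pos ht'
  simp only [gam, one_div]
  constructor
  · rw [← mul_inv]
    exact inv_anti₀ hσ_pos (hσρ _ ht')
  · rw [← div_eq_mul_inv, inv_le_iff_one_le_mul₀ hσ_pos, div_mul_eq_mul_div, one_le_div hρ_pos]
    exact hρσ _ ht'

end ParamEquiv

section Normalized

variable {ρ σ : ℝ → ℝ}

theorem isNormalized_iff :
    IsNormalized ρ ↔ ∀ s > 0, ∀ t > 0, min 1 (t / s) * ρ s ≤ ρ t := by
  constructor
  · rintro ⟨hmono, hanti⟩ s hs t ht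
    rcases le_total s t with hst | hts
    · rw [min_eq_left ((one_le_div hs).2 hst), one_mul]
      exact hmono hs ht hst
    · rw [min_eq_right ((div_le_one hs).2 hts), div_mul_eq_mul_div, mul_div_assoc,
        ← le_div_iff₀' ht]
      exact hanti ht hs hts
  · refine fun h => ⟨fun s (hs : 0 < s) t (ht : 0 < t) hst => ?_,
      fun s (hs : 0 < s) t (ht : 0 < t) hst => ?_⟩
    · simpa only [min_eq_left ((one_le_div hs).2 hst), one_mul] using h s hs t ht
    · have hle := h t ht s hs
      rwa [min_eq_right ((div_le_one ht).2 hst), div_mul_eq_mul_div, mul_div_assoc,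
        ← le_div_iff₀' hs] at hle

namespace IsNormalized

theorem div_const {a : ℝ} (h : IsNormalized ρ) (ha : 0 ≤ a) :
    IsNormalized fun t => ρ t / a := by
  rw [isNormalized_iff] at h ⊢
  intro s hs t ht
  rw [← mul_div_assoc]
  exact div_le_div_of_nonneg_right (h s hs t ht) ha

protected theorem continuousOn (h : IsNormalized ρ) : ContinuousOn ρ (Ioi 0) := by
  intro a (ha : 0 < a)
  rw [isNormalized_iff] at h
  have hlower : Filter.Tendsto (fun x => min 1 (x / a) * ρ a) (nhds a) (nhds (ρ a)) := by
    have : ContinuousAt (fun x => min 1 (x / a) * ρ a) a := by fun_prop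
    simpa only [ContinuousAt, div_self ha.ne', min_self, one_mul] using this
  have hupper : Filter.Tendsto (fun x => ρ a / min 1 (a / x)) (nhds a) (nhds (ρ a)) := by
    have : ContinuousAt (fun x => ρ a / min 1 (a / x)) a := by
      fun_prop (disch := simp [ha.ne'])
    simpa only [ContinuousAt, div_self ha.ne', min_self, div_one] using this
  refine (tendsto_of_tendsto_of_tendsto_of_le_of_le' hlower hupper ?_ ?_).mono_left
    nhdsWithin_le_nhds
  · filter_upwards [Ioi_mem_nhds ha] with x hx using h a ha x hx
  · filter_upwards [Ioi_mem_nhds ha] with x (hx : 0 < x)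
    rw [le_div_iff₀' (lt_min one_pos (div_pos ha hx))]
    exact h x hx a ha

protected theorem rbar (h : IsNormalized ρ) (hρ : IsDilationBounded ρ) :
    IsNormalized (rbar ρ) := by
  rw [isNormalized_iff] at h ⊢
  intro s hs t ht
  have hmin : 0 < min 1 (t / s) := lt_min one_pos (div_pos ht hs)
  rw [← le_div_iff₀' hmin, hρ.rbar_le_iff hs]
  intro u hu
  rw [div_mul_eq_mul_div, le_div_iff₀' hmin]
  calc min 1 (t / s) * ρ (s * u) = min 1 (t * u / (s * u)) * ρ (s * u) := by
        rw [mul_div_mul_right _ _ hu.ne']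
    _ ≤ ρ (t * u) := h _ (mul_pos hs hu) _ (mul_pos ht hu)
    _ ≤ rbar ρ t * ρ u := hρ.le_rbar_mul ht hu

protected theorem gam (h : IsNormalized ρ) (hρ : IsDilationBounded ρ) :
    IsNormalized (gam ρ) := by
  rw [isNormalized_iff]
  intro s hs t ht
  have hle := isNormalized_iff.1 (h.rbar hρ) _ (inv_pos.2 ht) _ (inv_pos.2 hs)
  rw [inv_div_inv] at hle
  rw [gam, gam, mul_one_div,
    div_le_div_iff₀ (hρ.rbar_pos (inv_pos.2 hs)) (hρ.rbar_pos (inv_pos.2 ht)), one_mul]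
  exact hle

theorem isClassBpm (h : IsNormalized ρ) (hρ : IsDilationBounded ρ) (hone : ρ 1 = 1)
    (hint : FiniteIntegral ρ) : IsClassBpm ρ where
  pos := hρ.pos
  cont := h.continuousOn
  one := hone
  bdd := hρ.bdd
  integ := hint

theorem isClassBpm_gam (h : IsNormalized ρ) (hρ : IsDilationBounded ρ) (hint : FiniteIntegral ρ) :
    IsClassBpm (gam ρ) :=
  (h.gam hρ).isClassBpm hρ.gam hρ.gam_one (hint.gam hρ)

end IsNormalized

theorem FiniteIntegral.of_paramEquiv (hint : FiniteIntegral ρ) (hρ : IsDilationBounded ρ)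
    (h : ParamEquiv ρ σ) (hσ : IsNormalized σ) : FiniteIntegral σ := by
  obtain ⟨K, -, hK⟩ := h.exists_rbar_le hρ
  have hσ_bdd := h.isDilationBounded hρ
  refine Integrable.mono' (hint.const_mul K) ?_ ?_
  · have hcont := (hσ.rbar hσ_bdd).continuousOn
    refine ContinuousOn.aestronglyMeasurable ?_ measurableSet_Ioi
    fun_prop (disch := exact fun u hu => (mem_Ioi.1 hu).ne')
  · filter_upwards [ae_restrict_mem measurableSet_Ioi] with u (hu : 0 < u)
    have hrbar := hσ_bdd.rbar_pos hu
    rw [Real.norm_of_nonneg (by positivity)]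
    calc min 1 (1 / u) * rbar σ u / u ≤ min 1 (1 / u) * (K * rbar ρ u) / u := by
          gcongr
          exact hK u hu
      _ = K * (min 1 (1 / u) * rbar ρ u / u) := by ring

end Normalized

section Submultiplicative

theorem image_const_div_Ioi {a : ℝ} (ha : 0 < a) : (fun t => a / t) '' Ioi 0 = Ioi 0 := by
  ext t
  constructor
  · rintro ⟨u, hu, rfl⟩
    exact div_pos ha hu
  · exact fun ht => ⟨a / t, div_pos ha ht, div_div_cancel₀ ha.ne'⟩

theorem hasDerivAt_const_div {a t : ℝ} (ht : t ≠ 0) :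
    HasDerivAt (fun t => a / t) (-(a / t ^ 2)) t := by
  simpa only [div_eq_mul_inv, neg_mul, mul_neg] using (hasDerivAt_inv ht).const_mul a

theorem injOn_const_div {a : ℝ} (ha : a ≠ 0) (s : Set ℝ) : InjOn (fun t => a / t) s :=
  fun _ _ _ _ h => by simpa [div_eq_mul_inv, ha] using h

theorem abs_deriv_mul_comp_const_div (f : ℝ → ℝ) {a t : ℝ} (ha : 0 < a) (ht : 0 < t) :
    |-(a / t ^ 2)| • (f (a / t) / (a / t)) = f (a / t) / t := by
  rw [abs_neg, abs_of_pos (by positivity), smul_eq_mul]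
  field_simp

theorem integrableOn_comp_const_div {f : ℝ → ℝ} {a : ℝ} (ha : 0 < a)
    (hf : IntegrableOn (fun t => f t / t) (Ioi 0)) :
    IntegrableOn (fun t => f (a / t) / t) (Ioi 0) := by
  rw [← image_const_div_Ioi ha, integrableOn_image_iff_integrableOn_abs_deriv_smul
    measurableSet_Ioi (fun t ht => (hasDerivAt_const_div (ne_of_gt ht)).hasDerivWithinAt)
    (injOn_const_div ha.ne' _)] at hf
  exact hf.congr_fun (fun t ht => abs_deriv_mul_comp_const_div f ha ht) measurableSet_Ioi

theorem integral_comp_const_div (f : ℝ → ℝ) {a : ℝ} (ha : 0 < a) :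
    ∫ t in Ioi 0, f (a / t) / t = ∫ t in Ioi 0, f t / t := by
  conv_rhs => rw [← image_const_div_Ioi ha, integral_image_eq_integral_abs_deriv_smul
    measurableSet_Ioi (fun t ht => (hasDerivAt_const_div (ne_of_gt ht)).hasDerivWithinAt)
    (injOn_const_div ha.ne' _)]
  exact setIntegral_congr_fun measurableSet_Ioi
    fun t ht => (abs_deriv_mul_comp_const_div f ha ht).symm

theorem min_one_div_mul_le {v w : ℝ} (hw : 0 < w) (hwv : w ≤ v) (hvw : v ≤ 4 * w) :
    min 1 (1 / (v * w)) ≤ 2 * (min 1 (1 / v) * min 1 (1 / w)) := by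
  have hv : 0 < v := hw.trans_le hwv
  have hvw_pos : 0 < v * w := mul_pos hv hw
  rcases le_total v 1 with hv1 | hv1
  · rw [min_eq_left ((one_le_div hv).2 hv1), min_eq_left ((one_le_div hw).2 (hwv.trans hv1))]
    linarith [min_le_left 1 (1 / (v * w))]
  rw [min_eq_right ((div_le_one hv).2 hv1)]
  rcases le_total w 1 with hw1 | hw1
  · rw [min_eq_left ((one_le_div hw).2 hw1), mul_one, mul_one_div]
    rcases le_total v 2 with hv2 | hv2
    · exact (min_le_left _ _).trans ((one_le_div hv).2 hv2)
    · refine (min_le_right _ _).trans ((div_le_div_iff₀ hvw_pos hv).2 ?_)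
      nlinarith
  · rw [min_eq_right ((div_le_one hw).2 hw1), one_div_mul_one_div]
    linarith [min_le_right 1 (1 / (v * w)), one_div_pos.2 hvw_pos]

theorem sqrt_min_mul_le_add {φ : ℝ → ℝ} (hnonneg : ∀ t > 0, 0 ≤ φ t)
    (hmul : ∀ s > 0, ∀ t > 0, φ (s * t) ≤ φ s * φ t) {v w : ℝ} (hw : 0 < w) (hwv : w ≤ v)
    (hvw : v ≤ 4 * w) :
    √(min 1 (1 / (v * w)) * φ (v * w)) ≤ min 1 (1 / v) * φ v + min 1 (1 / w) * φ w := by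
  have hv : 0 < v := hw.trans_le hwv
  have hφv := hnonneg v hv
  have hφw := hnonneg w hw
  refine Real.sqrt_le_iff.2 ⟨by positivity, ?_⟩
  calc min 1 (1 / (v * w)) * φ (v * w)
      ≤ 2 * (min 1 (1 / v) * min 1 (1 / w)) * (φ v * φ w) :=
        mul_le_mul (min_one_div_mul_le hw hwv hvw) (hmul v hv w hw)
          (hnonneg _ (mul_pos hv hw)) (by positivity)
    _ = 2 * (min 1 (1 / v) * φ v) * (min 1 (1 / w) * φ w) := by ring
    _ ≤ (min 1 (1 / v) * φ v + min 1 (1 / w) * φ w) ^ 2 := by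
        nlinarith [sq_nonneg (min 1 (1 / v) * φ v), sq_nonneg (min 1 (1 / w) * φ w)]

theorem le_two_mul_integral_div {g : ℝ → ℝ} {r c : ℝ} (hr : 0 < r)
    (hnonneg : ∀ t > 0, 0 ≤ g t) (hint : IntegrableOn (fun t => g t / t) (Ioi 0))
    (hc : ∀ t ∈ Ioc r (2 * r), c ≤ g t) : c ≤ 2 * ∫ t in Ioi 0, g t / t := by
  have hwindow : Ioc r (2 * r) ⊆ Ioi 0 := fun t ht => hr.trans ht.1
  have hpointwise : ∀ t ∈ Ioc r (2 * r), c / (2 * r) ≤ g t / t := fun t ht =>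
    (div_le_div_of_nonneg_right (hc t ht) (by positivity)).trans
      (div_le_div_of_nonneg_left (hnonneg t (hwindow ht)) (hwindow ht) ht.2)
  suffices c / 2 ≤ ∫ t in Ioi 0, g t / t by linarith
  calc c / 2 = c / (2 * r) * volume.real (Ioc r (2 * r)) := by
        rw [Real.volume_real_Ioc_of_le (by linarith)]
        field_simp
        ring
    _ ≤ ∫ t in Ioc r (2 * r), g t / t :=
        setIntegral_ge_of_const_le_real measurableSet_Ioc measure_Ioc_lt_top.ne hpointwise
          (hint.mono_set hwindow)
    _ ≤ ∫ t in Ioi 0, g t / t := by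
        refine setIntegral_mono_set hint ?_ hwindow.eventuallyLE
        filter_upwards [ae_restrict_mem measurableSet_Ioi] with t (ht : 0 < t)
        exact div_nonneg (hnonneg t ht) ht.le

theorem sqrt_le_four_mul_integral_div {f : ℝ → ℝ} (hnonneg : ∀ t > 0, 0 ≤ f t)
    (hsqrt : ∀ w > 0, ∀ v, w ≤ v → v ≤ 4 * w → √(f (v * w)) ≤ f v + f w)
    (hint : IntegrableOn (fun t => f t / t) (Ioi 0)) {u : ℝ} (hu : 0 < u) :
    √(f u) ≤ 4 * ∫ t in Ioi 0, f t / t := by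
  have hr : 0 < √u := Real.sqrt_pos.2 hu
  have hsqrt_mul : √u * √u = u := Real.mul_self_sqrt hu.le
  have hint_refl := integrableOn_comp_const_div hu hint
  have hint_sum : IntegrableOn (fun v => (f v + f (u / v)) / v) (Ioi 0) :=
    (hint.add hint_refl).congr_fun (fun v _ => (add_div ..).symm) measurableSet_Ioi
  have hwindow : ∀ v ∈ Ioc √u (2 * √u), √(f u) ≤ f v + f (u / v) := by
    rintro v ⟨hrv, hvr⟩
    have hv : 0 < v := hr.trans hrv
    have hle : u / v ≤ v := (div_le_iff₀ hv).2 (by nlinarith)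
    have hge : v ≤ 4 * (u / v) := by
      rw [mul_div_assoc', le_div_iff₀ hv]
      nlinarith
    simpa only [mul_div_cancel₀ u hv.ne'] using hsqrt (u / v) (div_pos hu hv) v hle hge
  calc √(f u) ≤ 2 * ∫ v in Ioi 0, (f v + f (u / v)) / v :=
        le_two_mul_integral_div hr
          (fun v hv => add_nonneg (hnonneg v hv) (hnonneg _ (div_pos hu hv)))
          hint_sum hwindow
    _ = 2 * ((∫ v in Ioi 0, f v / v) + ∫ v in Ioi 0, f (u / v) / v) := by
        simp only [add_div]
        rw [integral_add hint hint_refl]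
    _ = 4 * ∫ t in Ioi 0, f t / t := by
        rw [integral_comp_const_div f hu]
        ring

theorem exists_min_mul_le_of_submultiplicative {φ : ℝ → ℝ} (hnonneg : ∀ t > 0, 0 ≤ φ t)
    (hmul : ∀ s > 0, ∀ t > 0, φ (s * t) ≤ φ s * φ t)
    (hint : IntegrableOn (fun t => min 1 (1 / t) * φ t / t) (Ioi 0)) :
    ∃ B, ∀ t > 0, min 1 (1 / t) * φ t ≤ B := by
  have hf : ∀ t > 0, 0 ≤ min 1 (1 / t) * φ t := fun t ht =>
    mul_nonneg (by positivity) (hnonneg t ht)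
  refine ⟨(4 * ∫ t in Ioi 0, min 1 (1 / t) * φ t / t) ^ 2, fun t ht => ?_⟩
  exact (Real.sqrt_le_iff.1 (sqrt_le_four_mul_integral_div hf
    (fun _ hw _ hwv hvw => sqrt_min_mul_le_add hnonneg hmul hw hwv hvw) hint ht)).2

end Submultiplicative

section Majorant

/-- The least normalized majorant `t ↦ sup_{s>0} min(1, t/s) ρ(s)` of `ρ`; used where the supremum
is finite. -/
noncomputable def normalizedMajorant (ρ : ℝ → ℝ) (t : ℝ) : ℝ :=
  ⨆ s : Ioi (0 : ℝ), min 1 (t / s) * ρ s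

variable {ρ : ℝ → ℝ} {t B : ℝ}

theorem min_mul_le_normalizedMajorant
    (hbdd : BddAbove (range fun s : Ioi (0 : ℝ) => min 1 (t / s) * ρ s)) {s : ℝ} (hs : 0 < s) :
    min 1 (t / s) * ρ s ≤ normalizedMajorant ρ t :=
  le_ciSup hbdd ⟨s, hs⟩

theorem isNormalized_normalizedMajorant (hnonneg : ∀ t > 0, 0 ≤ ρ t)
    (hbdd : ∀ t > (0 : ℝ), BddAbove (range fun s : Ioi (0 : ℝ) => min 1 (t / s) * ρ s)) :
    IsNormalized (normalizedMajorant ρ) := by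
  rw [isNormalized_iff]
  intro s hs t ht
  rw [normalizedMajorant, Real.mul_iSup_of_nonneg (by positivity)]
  refine ciSup_le fun ⟨r, (hr : 0 < r)⟩ => ?_
  have hmin : min 1 (t / s) * min 1 (s / r) ≤ min 1 (t / r) := by
    refine le_min (mul_le_one₀ (min_le_left _ _) (by positivity) (min_le_left _ _)) ?_
    calc min 1 (t / s) * min 1 (s / r) ≤ t / s * (s / r) := by gcongr <;> exact min_le_right _ _
      _ = t / r := div_mul_div_cancel₀ hs.ne'
  calc min 1 (t / s) * (min 1 (s / r) * ρ r) = min 1 (t / s) * min 1 (s / r) * ρ r :=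
        (mul_assoc ..).symm
    _ ≤ min 1 (t / r) * ρ r := mul_le_mul_of_nonneg_right hmin (hnonneg r hr)
    _ ≤ normalizedMajorant ρ t := min_mul_le_normalizedMajorant (hbdd t ht) hr

namespace IsDilationBounded

theorem min_mul_le (h : IsDilationBounded ρ) (hB : ∀ u > 0, min 1 (1 / u) * rbar ρ u ≤ B)
    {s : ℝ} (hs : 0 < s) (ht : 0 < t) : min 1 (t / s) * ρ s ≤ B * ρ t := by
  have hst : 0 < s / t := div_pos hs ht
  calc min 1 (t / s) * ρ s = min 1 (1 / (s / t)) * ρ (s / t * t) := by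
        rw [one_div_div, div_mul_cancel₀ s ht.ne']
    _ ≤ min 1 (1 / (s / t)) * (rbar ρ (s / t) * ρ t) :=
        mul_le_mul_of_nonneg_left (h.le_rbar_mul hst ht) (by positivity)
    _ = min 1 (1 / (s / t)) * rbar ρ (s / t) * ρ t := (mul_assoc ..).symm
    _ ≤ B * ρ t := mul_le_mul_of_nonneg_right (hB _ hst) (h.pos t ht).le

theorem exists_isNormalized_paramEquiv (h : IsDilationBounded ρ)
    (hB : ∀ u > 0, min 1 (1 / u) * rbar ρ u ≤ B) :
    ∃ σ : ℝ → ℝ, IsNormalized σ ∧ ParamEquiv ρ σ := by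
  have hle : ∀ t > (0 : ℝ), ∀ s : Ioi (0 : ℝ), min 1 (t / s) * ρ s ≤ B * ρ t :=
    fun t ht s => h.min_mul_le hB s.2 ht
  have hbdd : ∀ t > (0 : ℝ), BddAbove (range fun s : Ioi (0 : ℝ) => min 1 (t / s) * ρ s) :=
    fun t ht => ⟨B * ρ t, forall_mem_range.2 (hle t ht)⟩
  have hB_pos : 0 < B := by
    have := hB 1 one_pos
    rw [div_one, min_self, one_mul, h.rbar_one] at this
    exact one_pos.trans_le this
  refine ⟨normalizedMajorant ρ,
    isNormalized_normalizedMajorant (fun t ht => (h.pos t ht).le) hbdd,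
    1, one_pos, B, hB_pos, fun t ht => ⟨?_, ciSup_le (hle t ht)⟩⟩
  simpa only [div_self ht.ne', min_self] using min_mul_le_normalizedMajorant (hbdd t ht) ht

theorem exists_isClassBpm_isNormalized_paramEquiv (h : IsDilationBounded ρ)
    (hint : FiniteIntegral ρ) :
    ∃ ρ₁ : ℝ → ℝ, IsClassBpm ρ₁ ∧ IsNormalized ρ₁ ∧ ParamEquiv ρ ρ₁ := by
  obtain ⟨B, hB⟩ := exists_min_mul_le_of_submultiplicative (fun _ ht => (h.rbar_pos ht).le)
    (fun _ hs _ ht => h.rbar_mul_le hs ht) hint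
  obtain ⟨σ, hσ, hρσ⟩ := h.exists_isNormalized_paramEquiv hB
  have hσ_one : 0 < σ 1 := (hρσ.isDilationBounded h).pos 1 one_pos
  have hnorm := hσ.div_const hσ_one.le
  have hequiv := hρσ.div_const hσ_one
  exact ⟨_, hnorm.isClassBpm (hequiv.isDilationBounded h) (div_self hσ_one.ne')
    (hint.of_paramEquiv h hequiv hnorm), hnorm, hequiv⟩

end IsDilationBounded

end Majorant

theorem statement9_general {ρ : ℝ → ℝ} (hρ : IsDilationBounded ρ) (hint : FiniteIntegral ρ) :
    (∀ t > 0, BddAbove (quotients (gam ρ) t) ∧ rbar (gam ρ) t = rbar ρ t) ∧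
    ((∀ t > 0, 0 < gam ρ t) ∧ gam ρ 1 = 1 ∧ FiniteIntegral (gam ρ)) ∧
    (IsNormalized ρ → IsClassBpm (gam ρ)) ∧
    (∃ ρ₁ : ℝ → ℝ, IsClassBpm ρ₁ ∧ IsNormalized ρ₁ ∧ ParamEquiv ρ ρ₁ ∧
      IsClassBpm (gam ρ₁) ∧ ParamEquiv (gam ρ) (gam ρ₁)) := by
  refine ⟨fun t ht => ⟨hρ.gam.bdd t ht, hρ.rbar_gam ht⟩,
    ⟨fun t ht => hρ.gam_pos ht, hρ.gam_one, hint.gam hρ⟩,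
    fun hnorm => hnorm.isClassBpm_gam hρ hint, ?_⟩
  obtain ⟨ρ₁, hρ₁, hnorm, hequiv⟩ := hρ.exists_isClassBpm_isNormalized_paramEquiv hint
  exact ⟨ρ₁, hρ₁, hnorm, hequiv, hnorm.isClassBpm_gam hρ₁.isDilationBounded hρ₁.integ,
    hequiv.gam hρ⟩

/-- Let `ρ ∈ ℬ^{+-}` and `γ(t) = 1/ρ̄(t⁻¹)`. Then `γ̄ ≤ ρ̄` (in particular `γ̄` is finite), and `γ`
satisfies all the conditions of `ℬ^{+-}` except possibly continuity. If `ρ(t)` is non-decreasing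
and `ρ(t)/t` non-increasing, then `γ ∈ ℬ^{+-}`. Every `ρ ∈ ℬ^{+-}` is equivalent to such a
normalized `ρ₁ ∈ ℬ^{+-}`, and then `γ` is equivalent to the function `γ₁ ∈ ℬ^{+-}` built
from `ρ₁`. -/
theorem statement9 (ρ : ℝ → ℝ) (hρ : IsClassBpm ρ) :
    (∀ t > 0, BddAbove (quotients (gam ρ) t) ∧ rbar (gam ρ) t ≤ rbar ρ t) ∧
    ((∀ t > 0, 0 < gam ρ t) ∧ gam ρ 1 = 1 ∧ FiniteIntegral (gam ρ)) ∧
    (IsNormalized ρ → IsClassBpm (gam ρ)) ∧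
    (∃ ρ₁ : ℝ → ℝ, IsClassBpm ρ₁ ∧ IsNormalized ρ₁ ∧ ParamEquiv ρ ρ₁ ∧
      IsClassBpm (gam ρ₁) ∧ ParamEquiv (gam ρ) (gam ρ₁)) :=
  have ⟨h_rbar, h_rest⟩ := statement9_general hρ.isDilationBounded hρ.integ
  ⟨fun t ht => (h_rbar t ht).imp_right le_of_eq, h_rest⟩
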